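/- Let m = ⌊(q + 1 + q(q−1)/2)/2⌋ and s = ⌊(1 + q(q−1)/2)/2⌋. Then the field of SL_2(F_q)-invariant rational functions satisfies F(a0,a1,a2)^{SL_2(F_q)} = F(B/Δ^m, J/Δ^{(q+1)/2}, Γ/Δ^s), and the three generators B/Δ^m, J/Δ^{(q+1)/2}, Γ/Δ^s are algebraically independent over F; in particular F(a0,a1,a2)^{SL_2(F_q)} is a purely transcendental extension of F of transcendence degree 3. -/

import Mathlib

open MvPolynomial
open scoped Classical

/-- The algebra automorphism of `F[a0,a1,a2]` induced by the upper-triangular matrix `σ_c`: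
`a0 ↦ a0`, `a1 ↦ a1 + c·a0`, `a2 ↦ a2 + 2c·a1 + c²·a0`.  Here `a_i = X i`. -/
noncomputable def σP (F : Type*) [Field F] (c : F) :
    MvPolynomial (Fin 3) F →ₐ[F] MvPolynomial (Fin 3) F :=
  aeval ![X 0, X 1 + C c * X 0, X 2 + C (2 * c) * X 1 + C (c ^ 2) * X 0]

/-- The algebra automorphism of `F[a0,a1,a2]` induced by `τ`: `a0 ↦ a2`, `a1 ↦ -a1`, `a2 ↦ a0`. -/
noncomputable def τA (F : Type*) [Field F] :
    MvPolynomial (Fin 3) F →ₐ[F] MvPolynomial (Fin 3) F :=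
  aeval ![X 2, -X 1, X 0]

/-- `σ_c` as an algebra equivalence (its inverse is `σ_{-c}`). -/
noncomputable def σE (F : Type*) [Field F] (c : F) :
    MvPolynomial (Fin 3) F ≃ₐ[F] MvPolynomial (Fin 3) F :=
  AlgEquiv.ofAlgHom (σP F c) (σP F (-c))
    (by apply MvPolynomial.algHom_ext; intro i; fin_cases i <;>
        simp [σP, mul_neg, neg_mul, map_ofNat] <;> ring)
    (by apply MvPolynomial.algHom_ext; intro i; fin_cases i <;>
        simp [σP, mul_neg, neg_mul, map_ofNat] <;> ring)

/-- `τ` as an algebra equivalence (it is an involution). -/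
noncomputable def τE (F : Type*) [Field F] :
    MvPolynomial (Fin 3) F ≃ₐ[F] MvPolynomial (Fin 3) F :=
  AlgEquiv.ofAlgHom (τA F) (τA F)
    (by apply MvPolynomial.algHom_ext; intro i; fin_cases i <;> simp [τA])
    (by apply MvPolynomial.algHom_ext; intro i; fin_cases i <;> simp [τA])

/-- The extension of `σ_c` to the field of fractions `F(a0,a1,a2)`. -/
noncomputable def σK (F : Type*) [Field F] (c : F) :
    FractionRing (MvPolynomial (Fin 3) F) ≃+* FractionRing (MvPolynomial (Fin 3) F) :=
  IsFractionRing.ringEquivOfRingEquiv (σE F c).toRingEquiv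

/-- The extension of `τ` to the field of fractions `F(a0,a1,a2)`. -/
noncomputable def τK (F : Type*) [Field F] :
    FractionRing (MvPolynomial (Fin 3) F) ≃+* FractionRing (MvPolynomial (Fin 3) F) :=
  IsFractionRing.ringEquivOfRingEquiv (τE F).toRingEquiv

/-!
Write `q = 2d + 1`, let `K` be the field of rational functions and `L` the field generated by the
three ratios. Up to constants, `B`, `J` and `Γ` are the products of the `F_q`-linear forms in
`a₀, a₁, a₂`, one per line, whose discriminant is a nonzero square, zero, or a nonsquare. The shears
permute these forms, and `τ` permutes them up to scalars; a relation between `τ` and a shear forces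
the resulting constant to be `1`, so the ratios are invariant.

Put `t = a₀² / Δ`. Eliminating `β` from the closed forms of the products `γ_k` makes `a₀ γ_k` equal
to `Δ^(d + 1)` times a polynomial in `t` over `L`. Multiplying over the nonsquares and over the
squares `k` gives equations for `t`, `Δ` and `a₀` over `L`, and `a₁` is then a root of an additive
polynomial of degree `q`; hence `[K : L] ≤ q (q² - 1) / 2`. Conversely the orbit of `a₀` contains
`s ℓ` for each nonzero square `s` and each of the `q + 1` linear forms `ℓ` on the conic, and its
stabilizer contains the `q` shears, so the group acting on `K` has order at least `q (q² - 1) / 2`.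
By Artin's theorem `L` is the fixed field, and as `K` is algebraic over `L`, the three generators
are algebraically independent.
-/

section QuadraticForms

variable {k M R : Type*} [CommRing k] [AddCommGroup M] [Module k M] [CommRing R] [Algebra k R]

/-- The action of `[[1, c], [0, 1]]` on triples: if `a` stands for the binary quadratic form
`a₀ X² + 2 a₁ X Y + a₂ Y²`, this substitutes `X + c Y` for `X`. -/
def shear (c : k) (a : Fin 3 → M) : Fin 3 → M :=
  ![a 0, a 1 + c • a 0, a 2 + (2 * c) • a 1 + c ^ 2 • a 0]

/-- The action of the Weyl element `[[0, 1], [-1, 0]]` on triples: the substitution of `(Y, -X)`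
for `(X, Y)` in `a₀ X² + 2 a₁ X Y + a₂ Y²`. -/
def weyl (a : Fin 3 → M) : Fin 3 → M :=
  ![a 2, -a 1, a 0]

/-- The pairing of triples for which `shear c` and `weyl` are self-adjoint. It sends scalar
triples `v` to the linear forms `⟨v, a⟩` in `a`, and `(0, 0, 1)` to `a₀`. -/
def polar (v : Fin 3 → k) (a : Fin 3 → M) : M :=
  v 0 • a 2 + (2 * v 1) • a 1 + v 2 • a 0

/-- The discriminant `a₁² - a₀ a₂` of the binary quadratic form attached to a triple. -/
def disc {R : Type*} [CommRing R] (a : Fin 3 → R) : R :=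
  a 1 ^ 2 - a 0 * a 2

theorem shear_neg_shear (c : k) (a : Fin 3 → M) : shear (-c) (shear c a) = a := by
  ext i
  fin_cases i <;> simp [shear]
  module

theorem weyl_weyl (a : Fin 3 → M) : weyl (weyl a) = a := by
  ext i
  fin_cases i <;> simp [weyl]

theorem weyl_smul (c : k) (a : Fin 3 → M) : weyl (c • a) = c • weyl a := by
  ext i
  fin_cases i <;> simp [weyl]

variable (k) in
theorem shear_one_weyl_shear_one_weyl_shear_one (a : Fin 3 → M) :
    shear (1 : k) (weyl (shear (1 : k) (weyl (shear (1 : k) a)))) = weyl a := by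
  ext i
  fin_cases i <;> simp [shear, weyl] <;> module

theorem polar_shear (v : Fin 3 → k) (c : k) (a : Fin 3 → M) :
    polar v (shear c a) = polar (shear c v) a := by
  simp [polar, shear]
  module

theorem polar_weyl (v : Fin 3 → k) (a : Fin 3 → M) : polar v (weyl a) = polar (weyl v) a := by
  simp [polar, weyl]
  abel

theorem polar_smul (c : k) (v : Fin 3 → k) (a : Fin 3 → M) :
    polar (c • v) a = c • polar v a := by
  simp [polar]
  module

theorem disc_shear (c : k) (a : Fin 3 → R) : disc (shear c a) = disc a := by
  simp [disc, shear, Algebra.smul_def, map_ofNat]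
  ring

theorem disc_weyl (a : Fin 3 → R) : disc (weyl a) = disc a := by
  simp [disc, weyl, mul_comm]

theorem disc_smul (c : k) (a : Fin 3 → R) : disc (c • a) = c ^ 2 • disc a := by
  simp [disc, Algebra.smul_def]
  ring

end QuadraticForms

section NormalizedForms

variable {k : Type*} [Field k]

/-- The first nonzero entry of a triple (and `0` for the zero triple), used to normalize triples
up to scalars. -/
noncomputable def lead (v : Fin 3 → k) : k :=
  if v 0 ≠ 0 then v 0 else if v 1 ≠ 0 then v 1 else v 2

theorem lead_smul (c : k) (v : Fin 3 → k) : lead (c • v) = c * lead v := by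
  by_cases hc : c = 0 <;> by_cases h0 : v 0 = 0 <;> by_cases h1 : v 1 = 0 <;>
    simp [lead, hc, h0, h1]

theorem lead_shear (c : k) (v : Fin 3 → k) : lead (shear c v) = lead v := by
  by_cases h0 : v 0 = 0 <;> by_cases h1 : v 1 = 0 <;> simp [lead, shear, h0, h1]

theorem lead_weyl_ne_zero {v : Fin 3 → k} (hv : lead v ≠ 0) : lead (weyl v) ≠ 0 := by
  by_cases h0 : v 0 = 0 <;> by_cases h1 : v 1 = 0 <;> by_cases h2 : v 2 = 0 <;>
    simp_all [lead, weyl]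

variable {Fq R : Type*} [Field Fq] [Fintype Fq] [CommRing R] [Algebra Fq R]

/-- Representatives, up to scalars, of the scalar triples whose normalization has its
discriminant in `T`. -/
noncomputable def normalizedForms (T : Finset Fq) : Finset (Fin 3 → Fq) :=
  Finset.univ.filter fun v => lead v = 1 ∧ disc v ∈ T

theorem mem_normalizedForms {T : Finset Fq} {v : Fin 3 → Fq} :
    v ∈ normalizedForms T ↔ lead v = 1 ∧ disc v ∈ T := by
  simp [normalizedForms]

/-- The product of the linear forms attached to `normalizedForms T`. -/
noncomputable def formProd (T : Finset Fq) (a : Fin 3 → R) : R :=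
  ∏ v ∈ normalizedForms T, polar v a

theorem formProd_shear (T : Finset Fq) (c : Fq) (a : Fin 3 → R) :
    formProd T (shear c a) = formProd T a := by
  refine Finset.prod_nbij' (shear c) (shear (-c)) ?_ ?_ (fun v _ => shear_neg_shear c v)
    (fun v _ => by simpa using shear_neg_shear (-c) v) (fun v _ => polar_shear v c a) <;>
  simp [mem_normalizedForms, lead_shear, disc_shear]

/-- The involution that `weyl` induces on lines, in terms of normalized representatives. -/
noncomputable def weylNormalized (v : Fin 3 → k) : Fin 3 → k :=
  (lead (weyl v))⁻¹ • weyl v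

theorem weylNormalized_weylNormalized {v : Fin 3 → k} (hv : lead v = 1) :
    weylNormalized (weylNormalized v) = v := by
  have hw : lead (weyl v) ≠ 0 := lead_weyl_ne_zero (by simp [hv])
  simp [weylNormalized, weyl_smul, weyl_weyl, lead_smul, hv, hw]

theorem weylNormalized_mem_normalizedForms {T : Finset Fq}
    (hT : ∀ x ∈ T, ∀ u : Fq, u ≠ 0 → u ^ 2 * x ∈ T) {v : Fin 3 → Fq}
    (hv : v ∈ normalizedForms T) : weylNormalized v ∈ normalizedForms T := by
  rw [mem_normalizedForms] at hv ⊢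
  have hw : lead (weyl v) ≠ 0 := lead_weyl_ne_zero (by simp [hv.1])
  rw [weylNormalized, lead_smul, disc_smul, disc_weyl]
  exact ⟨inv_mul_cancel₀ hw, hT _ hv.2 _ (inv_ne_zero hw)⟩

theorem formProd_weyl_eq_smul {T : Finset Fq}
    (hT : ∀ x ∈ T, ∀ u : Fq, u ≠ 0 → u ^ 2 * x ∈ T) (a : Fin 3 → R) :
    formProd T (weyl a) = (∏ v ∈ normalizedForms T, lead (weyl v)) • formProd T a := by
  have hpolar : ∀ v ∈ normalizedForms T,
      polar v (weyl a) = lead (weyl v) • polar (weylNormalized v) a := fun v hv => by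
    rw [polar_weyl, weylNormalized, polar_smul,
      smul_inv_smul₀ (lead_weyl_ne_zero (by simp [(mem_normalizedForms.1 hv).1]))]
  rw [formProd, Finset.prod_congr rfl hpolar, Finset.prod_smul]
  congr 1
  exact Finset.prod_nbij' weylNormalized weylNormalized
    (fun v => weylNormalized_mem_normalizedForms hT)
    (fun v => weylNormalized_mem_normalizedForms hT)
    (fun v hv => weylNormalized_weylNormalized (mem_normalizedForms.1 hv).1)
    (fun v hv => weylNormalized_weylNormalized (mem_normalizedForms.1 hv).1) (fun v _ => rfl)

theorem formProd_weyl {T : Finset Fq} (hT : ∀ x ∈ T, ∀ u : Fq, u ≠ 0 → u ^ 2 * x ∈ T)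
    (a : Fin 3 → R) : formProd T (weyl a) = formProd T a := by
  have hsemi := formProd_weyl_eq_smul (R := R) hT
  set ε := ∏ v ∈ normalizedForms T, lead (weyl v)
  have hε0 : ε ≠ 0 := Finset.prod_ne_zero_iff.2 fun v hv =>
    lead_weyl_ne_zero (by simp [(mem_normalizedForms.1 hv).1])
  -- The relation `weyl = shear ∘ weyl ∘ shear ∘ weyl ∘ shear` forces `ε = ε²`.
  have h := hsemi a
  rw [← shear_one_weyl_shear_one_weyl_shear_one Fq a, formProd_shear, hsemi, formProd_shear,
    hsemi, formProd_shear] at h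
  rw [hsemi]
  simpa [hε0] using congrArg (ε⁻¹ • ·) h

end NormalizedForms

section Invariants

variable (Fq : Type*) {R S : Type*} [Field Fq] [Fintype Fq] [CommRing R] [CommRing S]
  [Algebra Fq R] [Algebra Fq S]

/-- The set `Q` of nonzero squares. -/
noncomputable def nonzeroSquares : Finset Fq :=
  Finset.univ.filter fun k => k ≠ 0 ∧ IsSquare k

/-- The set `Q̄` of nonsquares. -/
noncomputable def nonsquares : Finset Fq :=
  Finset.univ.filter fun k => k ≠ 0 ∧ ¬ IsSquare k

/-- The product `β` over a triple `a`. -/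
noncomputable def betaProd (a : Fin 3 → R) : R :=
  ∏ c : Fq, (a 1 + c • a 0)

variable {Fq} in
/-- The product `γ_x` over a triple `a`. -/
noncomputable def gammaProd (x : Fq) (a : Fin 3 → R) : R :=
  ∏ c : Fq, polar ![1, c, c ^ 2 - x] a

/-- The invariant `J = a₀ γ₀`. -/
noncomputable def invJ (a : Fin 3 → R) : R :=
  a 0 * gammaProd (0 : Fq) a

/-- The invariant `B`, the product of `β` and the `γ_x` over the nonzero squares `x`. -/
noncomputable def invB (a : Fin 3 → R) : R :=
  betaProd Fq a * ∏ x ∈ nonzeroSquares Fq, gammaProd x a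

/-- The invariant `Γ`, the product of the `γ_x` over the nonsquares `x`. -/
noncomputable def invΓ (a : Fin 3 → R) : R :=
  ∏ x ∈ nonsquares Fq, gammaProd x a

variable {Fq}

theorem mem_nonzeroSquares {x : Fq} : x ∈ nonzeroSquares Fq ↔ x ≠ 0 ∧ IsSquare x := by
  simp [nonzeroSquares]

theorem mem_nonsquares {x : Fq} : x ∈ nonsquares Fq ↔ ¬ IsSquare x := by
  rw [nonsquares, Finset.mem_filter_univ, and_iff_right_iff_imp]
  rintro hx rfl
  exact hx IsSquare.zero

theorem sq_mul_mem_nonzeroSquares {u x : Fq} (hu : u ≠ 0) (hx : x ∈ nonzeroSquares Fq) :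
    u ^ 2 * x ∈ nonzeroSquares Fq := by
  rw [mem_nonzeroSquares] at hx ⊢
  exact ⟨mul_ne_zero (pow_ne_zero 2 hu) hx.1, (IsSquare.sq u).mul hx.2⟩

theorem sq_mul_mem_nonsquares {u x : Fq} (hu : u ≠ 0) (hx : x ∈ nonsquares Fq) :
    u ^ 2 * x ∈ nonsquares Fq := by
  rw [mem_nonsquares] at hx ⊢
  refine fun h => hx ?_
  simpa [hu] using (IsSquare.sq u⁻¹).mul h

theorem map_disc {A B : Type*} [CommRing A] [CommRing B] (f : A →+* B) (a : Fin 3 → A) :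
    f (disc a) = disc (f ∘ a) := by
  simp [disc]

theorem map_betaProd (f : R →ₐ[Fq] S) (a : Fin 3 → R) :
    f (betaProd Fq a) = betaProd Fq (f ∘ a) := by
  simp [betaProd]

theorem map_gammaProd (f : R →ₐ[Fq] S) (x : Fq) (a : Fin 3 → R) :
    f (gammaProd x a) = gammaProd x (f ∘ a) := by
  simp [gammaProd, polar]

theorem map_invJ (f : R →ₐ[Fq] S) (a : Fin 3 → R) : f (invJ Fq a) = invJ Fq (f ∘ a) := by
  simp [invJ, map_gammaProd]

theorem map_invB (f : R →ₐ[Fq] S) (a : Fin 3 → R) : f (invB Fq a) = invB Fq (f ∘ a) := by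
  simp [invB, map_gammaProd, map_betaProd]

theorem map_invΓ (f : R →ₐ[Fq] S) (a : Fin 3 → R) : f (invΓ Fq a) = invΓ Fq (f ∘ a) := by
  simp [invΓ, map_gammaProd]

theorem prod_normalizedForms_apply_zero_ne_zero (T : Finset Fq) (a : Fin 3 → R) :
    ∏ v ∈ normalizedForms T with v 0 ≠ 0, polar v a = ∏ x ∈ T, gammaProd x a := by
  simp only [gammaProd]
  rw [← Finset.prod_product']
  refine Finset.prod_nbij' (fun v => (disc v, v 1)) (fun y => ![1, y.2, y.2 ^ 2 - y.1])
    ?_ ?_ ?_ ?_ ?_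
  · simp +contextual [mem_normalizedForms]
  · simp +contextual [mem_normalizedForms, lead, disc]
  · intro v hv
    simp only [Finset.mem_filter, mem_normalizedForms] at hv
    have h0 : v 0 = 1 := by simpa [lead, hv.2] using hv.1.1
    ext i
    fin_cases i <;> simp [disc, h0]
  · simp [disc]
  · intro v hv
    simp only [Finset.mem_filter, mem_normalizedForms] at hv
    have h0 : v 0 = 1 := by simpa [lead, hv.2] using hv.1.1
    simp [polar, disc, h0]

theorem formProd_eq_mul_prod_gammaProd (T : Finset Fq) (a : Fin 3 → R) :
    formProd T a =
      (∏ v ∈ normalizedForms T with v 0 = 0, polar v a) * ∏ x ∈ T, gammaProd x a := by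
  rw [← prod_normalizedForms_apply_zero_ne_zero, formProd, Finset.prod_filter_mul_prod_filter_not]

theorem invJ_eq_formProd (a : Fin 3 → R) : invJ Fq a = formProd ({0} : Finset Fq) a := by
  have hforms : {v ∈ normalizedForms ({0} : Finset Fq) | v 0 = 0} = {![0, 0, 1]} := by
    ext v
    simp only [Finset.mem_filter, mem_normalizedForms, Finset.mem_singleton]
    constructor
    · rintro ⟨⟨hlead, hdisc⟩, h0⟩
      have h1 : v 1 = 0 := by simpa [disc, h0] using hdisc
      have h2 : v 2 = 1 := by simpa [lead, h0, h1] using hlead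
      ext i
      fin_cases i <;> simp [h0, h1, h2]
    · rintro rfl
      simp [lead, disc]
  rw [formProd_eq_mul_prod_gammaProd, hforms]
  simp [invJ, polar]

theorem invΓ_eq_formProd (a : Fin 3 → R) : invΓ Fq a = formProd (nonsquares Fq) a := by
  have hforms : {v ∈ normalizedForms (nonsquares Fq) | v 0 = 0} = ∅ := by
    refine Finset.filter_eq_empty_iff.2 fun v hv h0 => ?_
    rw [mem_normalizedForms, mem_nonsquares] at hv
    exact hv.2 ⟨v 1, by simp [disc, h0, sq]⟩
  rw [formProd_eq_mul_prod_gammaProd, hforms, Finset.prod_empty, one_mul, invΓ]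

theorem two_smul_betaProd (h2 : (2 : Fq) ≠ 0) (a : Fin 3 → R) :
    (2 : Fq) • betaProd Fq a = ∏ c : Fq, polar ![0, 1, c] a := by
  calc (2 : Fq) • betaProd Fq a = ∏ c : Fq, (2 : Fq) • (a 1 + c • a 0) := by
        rw [Finset.prod_smul, Finset.prod_const, Finset.card_univ, FiniteField.pow_card, betaProd]
    _ = ∏ c : Fq, polar ![0, 1, c] a :=
        Fintype.prod_equiv (Equiv.mulLeft₀ 2 h2) _ _ fun c => by simp [polar, mul_smul]

theorem two_smul_invB (h2 : (2 : Fq) ≠ 0) (a : Fin 3 → R) :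
    (2 : Fq) • invB Fq a = formProd (nonzeroSquares Fq) a := by
  have hforms : ∏ v ∈ normalizedForms (nonzeroSquares Fq) with v 0 = 0, polar v a =
      ∏ c : Fq, polar ![0, 1, c] a := by
    have h1 : ∀ v : Fin 3 → Fq, (lead v = 1 ∧ disc v ∈ nonzeroSquares Fq) ∧ v 0 = 0 →
        v = ![0, 1, v 2] := by
      rintro v ⟨⟨hlead, hdisc⟩, h0⟩
      have h1 : v 1 ≠ 0 := fun h1 => by simp [disc, h0, h1, mem_nonzeroSquares] at hdisc
      have h1 : v 1 = 1 := by simpa [lead, h0, h1] using hlead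
      ext i
      fin_cases i <;> simp [h0, h1]
    refine Finset.prod_nbij' (fun v => v 2) (fun c => ![0, 1, c]) ?_ ?_ ?_ ?_ ?_
    · simp
    · simp [mem_normalizedForms, lead, disc, mem_nonzeroSquares]
    · simp only [Finset.mem_filter, mem_normalizedForms]
      exact fun v hv => (h1 v hv).symm
    · simp
    · simp only [Finset.mem_filter, mem_normalizedForms]
      exact fun v hv => congrArg (polar · a) (h1 v hv)
  rw [formProd_eq_mul_prod_gammaProd, hforms, ← two_smul_betaProd h2, invB, smul_mul_assoc]

/-- Invariance of a function on triples under the maps `shear c` and `weyl`, which generate the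
action of `SL₂(F_q)`. -/
def IsSL2Invariant (Fq : Type*) {R α : Type*} [Field Fq] [CommRing R] [Algebra Fq R]
    (f : (Fin 3 → R) → α) : Prop :=
  (∀ (c : Fq) a, f (shear c a) = f a) ∧ ∀ a, f (weyl a) = f a

theorem isSL2Invariant_formProd {T : Finset Fq}
    (hT : ∀ x ∈ T, ∀ u : Fq, u ≠ 0 → u ^ 2 * x ∈ T) :
    IsSL2Invariant Fq (formProd T : (Fin 3 → R) → R) :=
  ⟨formProd_shear T, formProd_weyl hT⟩

omit [Fintype Fq] in
theorem isSL2Invariant_disc : IsSL2Invariant Fq (disc : (Fin 3 → R) → R) :=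
  ⟨disc_shear, disc_weyl⟩

theorem isSL2Invariant_invJ : IsSL2Invariant Fq (invJ Fq : (Fin 3 → R) → R) := by
  rw [_root_.funext invJ_eq_formProd]
  exact isSL2Invariant_formProd (by simp)

theorem isSL2Invariant_invΓ : IsSL2Invariant Fq (invΓ Fq : (Fin 3 → R) → R) := by
  rw [_root_.funext invΓ_eq_formProd]
  exact isSL2Invariant_formProd fun x hx u hu => sq_mul_mem_nonsquares hu hx

theorem isSL2Invariant_invB (h2 : (2 : Fq) ≠ 0) :
    IsSL2Invariant Fq (invB Fq : (Fin 3 → R) → R) := by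
  have hB : (invB Fq : (Fin 3 → R) → R) = fun a => (2 : Fq)⁻¹ • formProd (nonzeroSquares Fq) a :=
    _root_.funext fun a => by rw [← two_smul_invB h2, inv_smul_smul₀ h2]
  obtain ⟨hshear, hweyl⟩ := isSL2Invariant_formProd (R := R) (T := nonzeroSquares Fq)
    fun x hx u hu => sq_mul_mem_nonzeroSquares hu hx
  rw [hB]
  exact ⟨fun c a => by simp only [hshear], fun a => by simp only [hweyl]⟩

end Invariants

section FiniteFieldIdentities

variable {Fq K : Type*} [Field Fq] [Fintype Fq] [Field K] [Algebra Fq K] {d : ℕ}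

theorem two_ne_zero_of_card_eq (hq : Fintype.card Fq = 2 * d + 1) : (2 : Fq) ≠ 0 :=
  Ring.two_ne_zero fun h => by
    have := FiniteField.even_card_of_char_two h
    omega

theorem card_nonzeroSquares_add_card_nonsquares :
    (nonzeroSquares Fq).card + (nonsquares Fq).card = Fintype.card Fq - 1 := by
  rw [nonzeroSquares, nonsquares, ← Finset.filter_filter, ← Finset.filter_filter,
    Finset.card_filter_add_card_filter_not, Finset.filter_ne',
    Finset.card_erase_of_mem (Finset.mem_univ _), Finset.card_univ]

theorem card_nonzeroSquares_eq_card_nonsquares (h2 : (2 : Fq) ≠ 0) :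
    (nonzeroSquares Fq).card = (nonsquares Fq).card := by
  have hχ : ∀ x : Fq, quadraticChar Fq x =
      (if x ∈ nonzeroSquares Fq then 1 else 0) - (if x ∈ nonsquares Fq then 1 else 0) := by
    intro x
    by_cases h0 : x = 0
    · simp [h0, mem_nonzeroSquares, mem_nonsquares]
    by_cases hs : IsSquare x
    · simp [h0, hs, mem_nonzeroSquares, mem_nonsquares, (quadraticChar_one_iff_isSquare h0).2 hs]
    · simp [hs, mem_nonzeroSquares, mem_nonsquares, quadraticChar_neg_one_iff_not_isSquare.2 hs]
  have hsum := quadraticChar_sum_zero (F := Fq) fun h => h2 <| by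
    have := CharP.cast_eq_zero Fq (ringChar Fq)
    rwa [h] at this
  simp only [hχ, Finset.sum_sub_distrib, Finset.sum_boole, Finset.filter_univ_mem] at hsum
  exact_mod_cast sub_eq_zero.1 hsum

theorem card_nonzeroSquares (hq : Fintype.card Fq = 2 * d + 1) :
    (nonzeroSquares Fq).card = d := by
  have h1 := card_nonzeroSquares_add_card_nonsquares (Fq := Fq)
  have h2 := card_nonzeroSquares_eq_card_nonsquares (two_ne_zero_of_card_eq hq)
  omega

theorem card_nonsquares (hq : Fintype.card Fq = 2 * d + 1) : (nonsquares Fq).card = d := by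
  rw [← card_nonzeroSquares_eq_card_nonsquares (two_ne_zero_of_card_eq hq),
    card_nonzeroSquares hq]

theorem pow_eq_one_of_mem_nonzeroSquares (hq : Fintype.card Fq = 2 * d + 1) {x : Fq}
    (hx : x ∈ nonzeroSquares Fq) : x ^ d = 1 := by
  rw [mem_nonzeroSquares] at hx
  obtain ⟨hx0, y, rfl⟩ := hx
  rw [← sq, ← pow_mul, show 2 * d = Fintype.card Fq - 1 by omega]
  exact FiniteField.pow_card_sub_one_eq_one y (left_ne_zero_of_mul hx0)

variable (Fq) in
theorem prod_X_sub_C_eq_X_pow_card_sub_X :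
    ∏ c : Fq, (Polynomial.X - Polynomial.C c) =
      (Polynomial.X ^ Fintype.card Fq - Polynomial.X : Polynomial Fq) := by
  have hmonic : (Polynomial.X ^ Fintype.card Fq - Polynomial.X : Polynomial Fq).Monic :=
    Polynomial.monic_X_pow_sub (by simpa using Fintype.one_lt_card (α := Fq))
  rw [← Polynomial.prod_multiset_X_sub_C_of_monic_of_roots_card_eq hmonic (by
      rw [FiniteField.roots_X_pow_card_sub_X, FiniteField.X_pow_card_sub_X_natDegree_eq _
        Fintype.one_lt_card, Finset.card_val, Finset.card_univ]),
    FiniteField.roots_X_pow_card_sub_X]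
  rfl

variable (Fq) in
theorem prod_add_algebraMap (y : K) :
    ∏ c : Fq, (y + algebraMap Fq K c) = y ^ Fintype.card Fq - y := by
  have h := congrArg (Polynomial.aeval y) (prod_X_sub_C_eq_X_pow_card_sub_X Fq)
  simp only [map_prod, map_sub, map_pow, Polynomial.aeval_X, Polynomial.aeval_C] at h
  rw [← h]
  exact Fintype.prod_equiv (Equiv.neg Fq) _ _ fun c => by simp

variable (Fq) in
theorem prod_add_smul (y u : K) :
    ∏ c : Fq, (y + c • u) = y ^ Fintype.card Fq - y * u ^ (Fintype.card Fq - 1) := by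
  have hcard := Fintype.one_lt_card (α := Fq)
  obtain rfl | hu := eq_or_ne u 0
  · simp [show Fintype.card Fq - 1 ≠ 0 by omega]
  calc ∏ c : Fq, (y + c • u) = ∏ c : Fq, u * (y / u + algebraMap Fq K c) :=
        Finset.prod_congr rfl fun c _ => by rw [Algebra.smul_def]; field_simp
    _ = u ^ Fintype.card Fq * ((y / u) ^ Fintype.card Fq - y / u) := by
        rw [Finset.prod_mul_distrib, prod_add_algebraMap, Finset.prod_const, Finset.card_univ]
    _ = y ^ Fintype.card Fq - y * u ^ (Fintype.card Fq - 1) := by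
        rw [mul_sub, ← mul_pow, mul_div_cancel₀ _ hu, ← mul_pow_sub_one (by omega) u]
        field_simp

variable (Fq) in
theorem add_pow_card (y z : K) :
    (y + z) ^ Fintype.card Fq = y ^ Fintype.card Fq + z ^ Fintype.card Fq :=
  map_add (FiniteField.frobeniusAlgHom Fq K) y z

theorem prod_sq_sub_sq (hq : Fintype.card Fq = 2 * d + 1) (y u δ : K) :
    ∏ c : Fq, ((y + c • u) ^ 2 - δ ^ 2) =
      (∏ c : Fq, (y + c • u)) ^ 2 - δ ^ 2 * ((δ ^ 2) ^ d - u ^ (2 * d)) ^ 2 := by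
  have hfactor : ∀ c : Fq,
      (y + c • u) ^ 2 - δ ^ 2 = ((y + δ) + c • u) * ((y + -δ) + c • u) := fun c => by ring
  simp only [hfactor, Finset.prod_mul_distrib, prod_add_smul, add_pow_card Fq]
  rw [hq, Nat.add_sub_cancel, (odd_two_mul_add_one d).neg_pow]
  ring

theorem prod_sq_sub (hq : Fintype.card Fq = 2 * d + 1) (y u D : K) :
    ∏ c : Fq, ((y + c • u) ^ 2 - D) =
      (∏ c : Fq, (y + c • u)) ^ 2 - D * (D ^ d - u ^ (2 * d)) ^ 2 := by
  let L := AlgebraicClosure K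
  obtain ⟨δ, hδ⟩ := IsAlgClosed.exists_pow_nat_eq (algebraMap K L D) two_pos
  apply (algebraMap K L).injective
  simpa [hδ, Algebra.smul_def, ← IsScalarTower.algebraMap_apply Fq K L] using
    prod_sq_sub_sq hq (algebraMap K L y) (algebraMap K L u) δ

theorem pow_card_mul_gammaProd (hq : Fintype.card Fq = 2 * d + 1) (a : Fin 3 → K) (x : Fq) :
    a 0 ^ Fintype.card Fq * gammaProd x a =
      betaProd Fq a ^ 2 - (disc a + x • a 0 ^ 2) *
        ((disc a + x • a 0 ^ 2) ^ d - a 0 ^ (2 * d)) ^ 2 := by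
  rw [betaProd, ← prod_sq_sub hq, gammaProd, ← Finset.card_univ, ← Finset.prod_const,
    ← Finset.prod_mul_distrib]
  refine Finset.prod_congr rfl fun c _ => ?_
  simp [polar, disc, Algebra.smul_def, map_ofNat]
  ring

theorem betaProd_sq (hq : Fintype.card Fq = 2 * d + 1) (a : Fin 3 → K) :
    betaProd Fq a ^ 2 =
      invJ Fq a * a 0 ^ (2 * d) + disc a * (disc a ^ d - a 0 ^ (2 * d)) ^ 2 := by
  have h := pow_card_mul_gammaProd hq a 0
  rw [zero_smul, add_zero, hq] at h
  rw [invJ]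
  linear_combination -h

theorem mul_gammaProd (hq : Fintype.card Fq = 2 * d + 1) {a : Fin 3 → K} (h0 : a 0 ≠ 0)
    (x : Fq) :
    a 0 * gammaProd x a = invJ Fq a - 2 * x • (a 0 ^ 2) ^ (d + 1) +
      2 * (disc a + x • a 0 ^ 2) ^ (d + 1) - 2 * disc a ^ (d + 1) := by
  have h := pow_card_mul_gammaProd hq a x
  have hfrob := add_pow_card Fq (disc a) (x • a 0 ^ 2)
  rw [smul_pow, FiniteField.pow_card, hq] at hfrob
  rw [betaProd_sq hq a, hq] at h
  obtain ⟨D, hD⟩ : ∃ D, D = disc a + x • a 0 ^ 2 := ⟨_, rfl⟩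
  rw [← hD] at h hfrob ⊢
  rw [Algebra.smul_def] at hfrob hD ⊢
  apply mul_left_cancel₀ (pow_ne_zero (2 * d) h0)
  linear_combination h - hfrob - a 0 ^ (4 * d) * hD

end FiniteFieldIdentities

section DegreeBound

variable {F K : Type*} [Field F] [Field K] [Algebra F K] {E : IntermediateField F K} {x : K}
  {N n : ℕ}

theorem rank_le_mul_of_aeval_eq_zero {p : Polynomial E} (hp : p ≠ 0)
    (hx : Polynomial.aeval x p = 0) (hdeg : p.natDegree ≤ N)
    (h : ∀ E' : IntermediateField F K, E ≤ E' → x ∈ E' → Module.rank E' K ≤ n) :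
    Module.rank E K ≤ (N * n : ℕ) := by
  let L := IntermediateField.adjoin E {x}
  have hxint : IsIntegral E x := isAlgebraic_iff_isIntegral.1 ⟨p, hp, hx⟩
  have hEL : Module.rank E L ≤ N := by
    have := IntermediateField.adjoin.finiteDimensional hxint
    rw [← Module.finrank_eq_rank, IntermediateField.adjoin.finrank hxint]
    exact_mod_cast (Polynomial.natDegree_le_natDegree
      (minpoly.degree_le_of_ne_zero E x hp hx)).trans hdeg
  have hLK : Module.rank L K ≤ n := h (L.restrictScalars F)
    (fun y hy => L.algebraMap_mem ⟨y, hy⟩) (IntermediateField.mem_adjoin_simple_self E x)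
  rw [← rank_mul_rank E L K, Nat.cast_mul]
  exact mul_le_mul' hEL hLK

theorem rank_le_two_mul_of_sq_mem (hx : x ^ 2 ∈ E)
    (h : ∀ E' : IntermediateField F K, E ≤ E' → x ∈ E' → Module.rank E' K ≤ n) :
    Module.rank E K ≤ (2 * n : ℕ) :=
  rank_le_mul_of_aeval_eq_zero (p := Polynomial.X ^ 2 - Polynomial.C ⟨x ^ 2, hx⟩)
    (Polynomial.X_pow_sub_C_ne_zero two_pos _) (by simp) Polynomial.natDegree_X_pow_sub_C.le h

theorem rank_le_mul_of_pow_mul_eq_aeval {c : E} {j : ℕ} {P : Polynomial E} (hj : j ≠ 0)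
    (hjN : j ≤ N) (hP : P.natDegree ≤ N) (hP0 : P.eval 0 ≠ 0)
    (hx : x ^ j * c = Polynomial.aeval x P)
    (h : ∀ E' : IntermediateField F K, E ≤ E' → x ∈ E' → Module.rank E' K ≤ n) :
    Module.rank E K ≤ (N * n : ℕ) := by
  refine rank_le_mul_of_aeval_eq_zero (p := Polynomial.C c * Polynomial.X ^ j - P) ?_ ?_ ?_ h
  · exact fun hp => hP0 (by simpa [hj] using congrArg (Polynomial.eval 0) hp)
  · rw [map_sub, map_mul, map_pow, Polynomial.aeval_X, Polynomial.aeval_C, ← hx]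
    exact sub_eq_zero.2 (mul_comm _ _)
  · exact Polynomial.natDegree_sub_le_of_le
      ((Polynomial.natDegree_C_mul_X_pow_le c j).trans hjN) hP |>.trans_eq (max_self N)

theorem rank_eq_one_of_subset {S : Set K} (hS : IntermediateField.adjoin F S = ⊤) (hSE : S ⊆ E) :
    Module.rank E K = 1 := by
  obtain rfl : E = ⊤ := top_le_iff.1 (hS ▸ IntermediateField.adjoin_le_iff.2 hSE)
  exact IntermediateField.rank_top

theorem aeval_mem_of_le {E' : IntermediateField F K} (hE : E ≤ E') (hx : x ∈ E')
    (P : Polynomial E) : Polynomial.aeval x P ∈ E' := by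
  rw [Polynomial.aeval_eq_sum_range]
  exact sum_mem fun i _ => mul_mem (hE (P.coeff i).2) (pow_mem hx i)

end DegreeBound

section GammaPoly

variable {Fq R A : Type*} [Field Fq] [CommRing R] [Algebra Fq R] (d : ℕ) (g : R) (x : Fq)

/-- The polynomial with `a₀ γ_x = Δ ^ (d + 1) * gammaPoly d g x (a₀² / Δ)`, where
`g = J / Δ ^ (d + 1)` and `q = 2 d + 1`. -/
noncomputable def gammaPoly : Polynomial R :=
  Polynomial.C g - Polynomial.C (algebraMap Fq R (2 * x)) * Polynomial.X ^ (d + 1) +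
    Polynomial.C 2 * (Polynomial.C (algebraMap Fq R x) * Polynomial.X + Polynomial.C 1) ^ (d + 1) -
    Polynomial.C 2

theorem natDegree_gammaPoly_le : (gammaPoly d g x).natDegree ≤ d + 1 := by
  unfold gammaPoly
  compute_degree!

variable {d x} in
theorem natDegree_gammaPoly_le_of_pow_eq_one (hx : x ^ d = 1) :
    (gammaPoly d g x).natDegree ≤ d := by
  refine Polynomial.natDegree_le_pred (natDegree_gammaPoly_le d g x) ?_
  have hlead : ((Polynomial.C (algebraMap Fq R x) * Polynomial.X +
      Polynomial.C 1) ^ (d + 1)).coeff (d + 1) = algebraMap Fq R x := by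
    have h := Polynomial.coeff_pow_of_natDegree_le (m := d + 1)
      (Polynomial.natDegree_linear_le (a := algebraMap Fq R x) (b := 1))
    rw [mul_one] at h
    rw [h]
    simp [-map_one, Polynomial.coeff_C, ← map_pow, pow_succ x, hx]
  rw [gammaPoly, Polynomial.coeff_sub, Polynomial.coeff_add, Polynomial.coeff_sub,
    Polynomial.coeff_C_mul, Polynomial.coeff_C_mul, hlead]
  simp [map_ofNat]

theorem eval_zero_gammaPoly : (gammaPoly d g x).eval 0 = g := by
  simp [gammaPoly]

theorem aeval_gammaPoly [CommRing A] [Algebra R A] [Algebra Fq A] [IsScalarTower Fq R A] (t : A) :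
    Polynomial.aeval t (gammaPoly d g x) =
      algebraMap R A g - 2 * x • t ^ (d + 1) + 2 * (x • t + 1) ^ (d + 1) - 2 := by
  simp [gammaPoly, Algebra.smul_def, ← IsScalarTower.algebraMap_apply Fq R A, map_ofNat, mul_assoc]

end GammaPoly

section Nonvanishing

variable {Fq M K : Type*} [Field Fq] [AddCommGroup M] [Module Fq M] [Field K] [Algebra Fq K]

theorem polar_injective (h2 : (2 : Fq) ≠ 0) {a : Fin 3 → M} (ha : LinearIndependent Fq a) :
    Function.Injective fun v : Fin 3 → Fq => polar v a := by
  intro v w hvw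
  have hcoord : ∀ u : Fin 3 → Fq, polar u a = ∑ i, ![u 2, 2 * u 1, u 0] i • a i := fun u => by
    simp [polar, Fin.sum_univ_three]
    abel
  simp only [hcoord] at hvw
  have h := ha.fintypeLinearCombination_injective (a₁ := ![v 2, 2 * v 1, v 0])
    (a₂ := ![w 2, 2 * w 1, w 0]) (by simpa [Fintype.linearCombination_apply] using hvw)
  ext i
  fin_cases i
  · simpa using congrFun h 2
  · simpa [h2] using congrFun h 1
  · simpa using congrFun h 0

theorem polar_ne_zero (h2 : (2 : Fq) ≠ 0) {a : Fin 3 → M} (ha : LinearIndependent Fq a)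
    {v : Fin 3 → Fq} (hv : v ≠ 0) : polar v a ≠ 0 := fun h =>
  hv (polar_injective h2 ha (by simpa [polar] using h))

variable [Fintype Fq] {a : Fin 3 → K}

theorem formProd_ne_zero (h2 : (2 : Fq) ≠ 0) (ha : LinearIndependent Fq a) (T : Finset Fq) :
    formProd T a ≠ 0 := by
  refine Finset.prod_ne_zero_iff.2 fun v hv => polar_ne_zero h2 ha ?_
  rintro rfl
  simpa [lead] using (mem_normalizedForms.1 hv).1

theorem invJ_ne_zero (h2 : (2 : Fq) ≠ 0) (ha : LinearIndependent Fq a) : invJ Fq a ≠ 0 := by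
  rw [invJ_eq_formProd]
  exact formProd_ne_zero h2 ha _

theorem invB_ne_zero (h2 : (2 : Fq) ≠ 0) (ha : LinearIndependent Fq a) : invB Fq a ≠ 0 := by
  refine right_ne_zero_of_smul (a := (2 : Fq)) ?_
  rw [two_smul_invB h2]
  exact formProd_ne_zero h2 ha _

theorem invΓ_ne_zero (h2 : (2 : Fq) ≠ 0) (ha : LinearIndependent Fq a) : invΓ Fq a ≠ 0 := by
  rw [invΓ_eq_formProd]
  exact formProd_ne_zero h2 ha _

end Nonvanishing

section Relations

variable {Fq R : Type*} [Field Fq] [Fintype Fq] [CommRing R] [Algebra Fq R] {d : ℕ}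

variable (Fq) in
/-- The product of the `gammaPoly d g x` over the nonsquares `x`, whose value at `a₀² / Δ` is
`a₀ ^ d Γ`, up to a power of `Δ`. -/
noncomputable def nonsquarePoly (d : ℕ) (g : R) : Polynomial R :=
  ∏ x ∈ nonsquares Fq, gammaPoly d g x

variable (Fq) in
/-- The product of the `gammaPoly d g x` over the nonzero squares `x`, whose value at `a₀² / Δ` is
`a₀ ^ d B / β`, up to a power of `Δ`. -/
noncomputable def squarePoly (d : ℕ) (g : R) : Polynomial R :=
  ∏ x ∈ nonzeroSquares Fq, gammaPoly d g x

/-- The polynomial whose value at `a₀² / Δ` is `β²`, up to a power of `Δ`. -/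
noncomputable def betaSqPoly (d : ℕ) (g : R) : Polynomial R :=
  Polynomial.C g * Polynomial.X ^ d + (1 - Polynomial.X ^ d) ^ 2

theorem natDegree_nonsquarePoly_le (hq : Fintype.card Fq = 2 * d + 1) (g : R) :
    (nonsquarePoly Fq d g).natDegree ≤ d * (d + 1) := by
  refine (Polynomial.natDegree_prod_le _ _).trans ?_
  simpa [card_nonsquares hq] using
    Finset.sum_le_card_nsmul (nonsquares Fq) _ (d + 1) fun x _ => natDegree_gammaPoly_le d g x

theorem natDegree_squarePoly_le (hq : Fintype.card Fq = 2 * d + 1) (g : R) :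
    (squarePoly Fq d g).natDegree ≤ d * d := by
  refine (Polynomial.natDegree_prod_le _ _).trans ?_
  simpa [card_nonzeroSquares hq] using
    Finset.sum_le_card_nsmul (nonzeroSquares Fq) _ d fun x hx =>
      natDegree_gammaPoly_le_of_pow_eq_one g (pow_eq_one_of_mem_nonzeroSquares hq hx)

theorem natDegree_betaSqPoly_le (d : ℕ) (g : R) : (betaSqPoly d g).natDegree ≤ 2 * d := by
  unfold betaSqPoly
  compute_degree
  omega

theorem eval_zero_nonsquarePoly (hq : Fintype.card Fq = 2 * d + 1) (g : R) :
    (nonsquarePoly Fq d g).eval 0 = g ^ d := by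
  simp [nonsquarePoly, Polynomial.eval_prod, eval_zero_gammaPoly, card_nonsquares hq]

theorem eval_zero_squarePoly (hq : Fintype.card Fq = 2 * d + 1) (g : R) :
    (squarePoly Fq d g).eval 0 = g ^ d := by
  simp [squarePoly, Polynomial.eval_prod, eval_zero_gammaPoly, card_nonzeroSquares hq]

theorem eval_zero_betaSqPoly (hd : d ≠ 0) (g : R) : (betaSqPoly d g).eval 0 = 1 := by
  simp [betaSqPoly, hd]

variable {L K : Type*} [Field L] [Field K] [Algebra L K] [Algebra Fq K]
  {a : Fin 3 → K} {g : L}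

theorem betaProd_sq_eq_aeval (hq : Fintype.card Fq = 2 * d + 1) (hΔ : disc a ≠ 0)
    (hg : algebraMap L K g = invJ Fq a / disc a ^ (d + 1)) :
    betaProd Fq a ^ 2 =
      disc a ^ (2 * d + 1) * Polynomial.aeval (a 0 ^ 2 / disc a) (betaSqPoly d g) := by
  rw [betaProd_sq hq]
  simp only [betaSqPoly, map_add, map_mul, map_pow, map_sub, map_one, Polynomial.aeval_C,
    Polynomial.aeval_X, hg, div_pow]
  field_simp
  ring

variable [Algebra Fq L] [IsScalarTower Fq L K]

theorem mul_gammaProd_eq_aeval (hq : Fintype.card Fq = 2 * d + 1) (h0 : a 0 ≠ 0)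
    (hΔ : disc a ≠ 0) (hg : algebraMap L K g = invJ Fq a / disc a ^ (d + 1)) (x : Fq) :
    a 0 * gammaProd x a =
      disc a ^ (d + 1) * Polynomial.aeval (a 0 ^ 2 / disc a) (gammaPoly d g x) := by
  have hfactor : disc a + x • a 0 ^ 2 = disc a * (x • (a 0 ^ 2 / disc a) + 1) := by
    rw [Algebra.smul_def, Algebra.smul_def]
    field_simp
    ring
  rw [mul_gammaProd hq h0, aeval_gammaPoly, hg, hfactor, mul_pow, div_pow]
  simp only [Algebra.smul_def]
  field_simp

theorem pow_mul_invΓ (hq : Fintype.card Fq = 2 * d + 1) (h0 : a 0 ≠ 0)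
    (hΔ : disc a ≠ 0) (hg : algebraMap L K g = invJ Fq a / disc a ^ (d + 1)) :
    a 0 ^ d * invΓ Fq a =
      disc a ^ (d * (d + 1)) * Polynomial.aeval (a 0 ^ 2 / disc a) (nonsquarePoly Fq d g) := by
  have h := Finset.prod_congr (rfl : nonsquares Fq = _)
    fun x _ => mul_gammaProd_eq_aeval hq h0 hΔ hg x
  rw [Finset.prod_mul_distrib, Finset.prod_mul_distrib, Finset.prod_const, Finset.prod_const,
    card_nonsquares hq, ← pow_mul, mul_comm (d + 1)] at h
  rw [invΓ, h, nonsquarePoly, map_prod]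

theorem pow_mul_invB (hq : Fintype.card Fq = 2 * d + 1) (h0 : a 0 ≠ 0)
    (hΔ : disc a ≠ 0) (hg : algebraMap L K g = invJ Fq a / disc a ^ (d + 1)) :
    a 0 ^ d * invB Fq a = betaProd Fq a *
      (disc a ^ (d * (d + 1)) * Polynomial.aeval (a 0 ^ 2 / disc a) (squarePoly Fq d g)) := by
  have h := Finset.prod_congr (rfl : nonzeroSquares Fq = _)
    fun x _ => mul_gammaProd_eq_aeval hq h0 hΔ hg x
  rw [Finset.prod_mul_distrib, Finset.prod_mul_distrib, Finset.prod_const, Finset.prod_const,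
    card_nonzeroSquares hq, ← pow_mul, mul_comm (d + 1)] at h
  rw [invB, mul_left_comm, h, squarePoly, map_prod]

theorem pow_mul_invB_sq (hq : Fintype.card Fq = 2 * d + 1) (h0 : a 0 ≠ 0) (hΔ : disc a ≠ 0)
    (hg : algebraMap L K g = invJ Fq a / disc a ^ (d + 1)) :
    (a 0 ^ 2 / disc a) ^ d * invB Fq a ^ 2 = disc a ^ ((2 * d + 1) * (d + 1)) *
      Polynomial.aeval (a 0 ^ 2 / disc a) (betaSqPoly d g * squarePoly Fq d g ^ 2) := by
  have hB := congrArg (· ^ 2) (pow_mul_invB hq h0 hΔ hg)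
  simp only [mul_pow, betaProd_sq_eq_aeval hq hΔ hg] at hB
  rw [div_pow, div_mul_eq_mul_div, div_eq_iff (pow_ne_zero d hΔ), pow_right_comm, hB, map_mul,
    map_pow]
  ring

theorem pow_mul_invB_div_sq (hq : Fintype.card Fq = 2 * d + 1) (h0 : a 0 ≠ 0) (hΔ : disc a ≠ 0)
    (hg : algebraMap L K g = invJ Fq a / disc a ^ (d + 1)) {m j : ℕ}
    (hm : 2 * m = (2 * d + 1) * (d + 1) + j) :
    (a 0 ^ 2 / disc a) ^ d * (invB Fq a / disc a ^ m) ^ 2 * disc a ^ j =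
      Polynomial.aeval (a 0 ^ 2 / disc a) (betaSqPoly d g * squarePoly Fq d g ^ 2) := by
  have hpow : (disc a ^ m) ^ 2 = disc a ^ ((2 * d + 1) * (d + 1)) * disc a ^ j := by
    rw [← pow_mul, mul_comm m, hm, pow_add]
  rw [div_pow (invB Fq a), hpow, mul_div_assoc', pow_mul_invB_sq hq h0 hΔ hg]
  field_simp

theorem pow_mul_invΓ_div (hq : Fintype.card Fq = 2 * d + 1) (h0 : a 0 ≠ 0) (hΔ : disc a ≠ 0)
    (hg : algebraMap L K g = invJ Fq a / disc a ^ (d + 1)) {s e j : ℕ} (hd : d = 2 * e + j)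
    (hs : 2 * s = (2 * d + 1) * d + j) :
    a 0 ^ j * ((a 0 ^ 2 / disc a) ^ e * (invΓ Fq a / disc a ^ s)) =
      Polynomial.aeval (a 0 ^ 2 / disc a) (nonsquarePoly Fq d g) := by
  have hexp : d * (d + 1) = e + s := by nlinarith
  have h := pow_mul_invΓ hq h0 hΔ hg
  have hpow : a 0 ^ d = (a 0 ^ 2) ^ e * a 0 ^ j := by rw [hd, pow_add, pow_mul]
  rw [hexp, pow_add, mul_assoc, hpow] at h
  apply mul_left_cancel₀ (pow_ne_zero s hΔ)
  apply mul_left_cancel₀ (pow_ne_zero e hΔ)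
  rw [← h, div_pow]
  field_simp

end Relations

section RankBound

variable {Fq F K : Type*} [Field Fq] [Fintype Fq] [Field F] [Field K] [Algebra Fq F] [Algebra F K]
  [Algebra Fq K] {E : IntermediateField F K} {a : Fin 3 → K} {d m s e n : ℕ}

omit [Algebra Fq F] in
theorem rank_le_card_of_betaProd_mem (ha : IntermediateField.adjoin F (Set.range a) = ⊤)
    (h0 : a 0 ≠ 0) (haE : a 0 ∈ E) (hΔE : disc a ∈ E) (hβE : betaProd Fq a ∈ E) :
    Module.rank E K ≤ Fintype.card Fq := by
  have hq := Fintype.one_lt_card (α := Fq)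
  set q := Fintype.card Fq
  let u : E := ⟨a 0, haE⟩
  let b : E := ⟨betaProd Fq a, hβE⟩
  let ℓ : Polynomial E := Polynomial.C (u ^ (q - 1)) * Polynomial.X + Polynomial.C b
  have hℓ : ℓ.degree < q := Polynomial.degree_linear_le.trans_lt (by exact_mod_cast hq)
  -- `a₁` is a root of the additive polynomial `∏ (X + c a₀) - β`.
  have hroot : Polynomial.aeval (a 1) (Polynomial.X ^ q - ℓ) = 0 := by
    simp [ℓ, u, b, betaProd, prod_add_smul, q]
    ring
  have hdeg : (Polynomial.X ^ q - ℓ).natDegree ≤ q := by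
    unfold ℓ
    compute_degree
    exact max_le le_rfl hq.le
  have h := rank_le_mul_of_aeval_eq_zero (n := 1) (Polynomial.monic_X_pow_sub hℓ).ne_zero
    hroot hdeg fun E' hE h1E => (rank_eq_one_of_subset ha ?_).le.trans_eq Nat.cast_one.symm
  · rwa [mul_one] at h
  have h2 : a 2 = (a 1 ^ 2 - disc a) / a 0 := by
    rw [disc]
    field_simp
    ring
  rintro _ ⟨i, rfl⟩
  fin_cases i
  · exact hE haE
  · exact h1E
  · change a 2 ∈ E'
    rw [h2]
    exact div_mem (sub_mem (pow_mem h1E 2) (hE hΔE)) (hE haE)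

variable [IsScalarTower Fq F K]

instance isScalarTower_intermediateField : IsScalarTower Fq E K :=
  IsScalarTower.to₁₃₄ Fq F E K

theorem betaProd_mem (hq : Fintype.card Fq = 2 * d + 1) (ha : LinearIndependent Fq a)
    (hΔ : disc a ≠ 0) (hJE : invJ Fq a / disc a ^ (d + 1) ∈ E) (hBE : invB Fq a / disc a ^ m ∈ E)
    (haE : a 0 ∈ E) (hΔE : disc a ∈ E) : betaProd Fq a ∈ E := by
  let g : E := ⟨_, hJE⟩
  set D := disc a ^ (d * (d + 1)) *
    Polynomial.aeval (a 0 ^ 2 / disc a) (squarePoly Fq d g)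
  have hDE : D ∈ E := mul_mem (pow_mem hΔE _)
    (aeval_mem_of_le le_rfl (div_mem (pow_mem haE 2) hΔE) _)
  have hB : a 0 ^ d * invB Fq a = betaProd Fq a * D :=
    pow_mul_invB hq (ha.ne_zero 0) hΔ (g := g) rfl
  have hD0 : D ≠ 0 := right_ne_zero_of_mul <| hB ▸ mul_ne_zero (pow_ne_zero d (ha.ne_zero 0))
    (invB_ne_zero (two_ne_zero_of_card_eq hq) ha)
  rw [eq_div_of_mul_eq hD0 hB.symm, ← div_mul_cancel₀ (invB Fq a) (pow_ne_zero m hΔ)]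
  exact div_mem (mul_mem (pow_mem haE d) (mul_mem hBE (pow_mem hΔE m))) hDE

variable (hq : Fintype.card Fq = 2 * d + 1) (ha : LinearIndependent Fq a) (hΔ : disc a ≠ 0)
  (hJE : invJ Fq a / disc a ^ (d + 1) ∈ E) (hBE : invB Fq a / disc a ^ m ∈ E)
  (hΓE : invΓ Fq a / disc a ^ s ∈ E)
  (h : ∀ E' : IntermediateField F K, E ≤ E' → a 0 ∈ E' → disc a ∈ E' → Module.rank E' K ≤ n)
include hq ha hΔ hJE hBE hΓE h

theorem rank_le_of_even (hd : d = 2 * e) (hd0 : d ≠ 0) (hm : 2 * m = (2 * d + 1) * (d + 1) + 1)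
    (hs : 2 * s = (2 * d + 1) * d) : Module.rank E K ≤ (d * (2 * d + 2) * n : ℕ) := by
  let g : E := ⟨_, hJE⟩
  have h2 := two_ne_zero_of_card_eq hq
  have h0 := ha.ne_zero 0
  set t := a 0 ^ 2 / disc a
  have hΓt : t ^ e * (invΓ Fq a / disc a ^ s) = Polynomial.aeval t (nonsquarePoly Fq d g) := by
    simpa using pow_mul_invΓ_div hq h0 hΔ (g := g) rfl (j := 0) hd hs
  have hBt := pow_mul_invB_div_sq hq h0 hΔ (g := g) rfl hm
  have hg : g ≠ 0 := Subtype.coe_ne_coe.1 (div_ne_zero (invJ_ne_zero h2 ha) (pow_ne_zero _ hΔ))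
  have hrank : Module.rank E K ≤ (d * (d + 1) * (2 * n) : ℕ) := by
    refine rank_le_mul_of_pow_mul_eq_aeval (c := ⟨_, hΓE⟩) (j := e) (x := t) (by omega)
      (by nlinarith) (natDegree_nonsquarePoly_le hq g)
      (by simp [eval_zero_nonsquarePoly hq, hg]) hΓt fun E₁ hE₁ htE => ?_
    have hΔE : disc a ∈ E₁ := by
      have hc : t ^ d * (invB Fq a / disc a ^ m) ^ 2 ≠ 0 := by
        simp [t, h0, hΔ, invB_ne_zero h2 ha]
      rw [pow_one, mul_comm] at hBt
      rw [eq_div_of_mul_eq hc hBt]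
      exact div_mem (aeval_mem_of_le hE₁ htE _)
        (mul_mem (pow_mem htE d) (pow_mem (hE₁ hBE) 2))
    have haE : a 0 ^ 2 ∈ E₁ := div_mul_cancel₀ (a 0 ^ 2) hΔ ▸ mul_mem htE hΔE
    exact rank_le_two_mul_of_sq_mem haE fun E₂ hE₂ haE => h E₂ (hE₁.trans hE₂) haE (hE₂ hΔE)
  exact hrank.trans_eq (by ring_nf)

theorem rank_le_of_odd (hd : d = 2 * e + 1) (hm : 2 * m = (2 * d + 1) * (d + 1))
    (hs : 2 * s = (2 * d + 1) * d + 1) : Module.rank E K ≤ (d * (2 * d + 2) * n : ℕ) := by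
  let g : E := ⟨_, hJE⟩
  have h2 := two_ne_zero_of_card_eq hq
  have h0 := ha.ne_zero 0
  set t := a 0 ^ 2 / disc a with ht
  have hΓt := pow_mul_invΓ_div hq h0 hΔ (g := g) rfl hd hs
  have hBt : t ^ d * (invB Fq a / disc a ^ m) ^ 2 =
      Polynomial.aeval t (betaSqPoly d g * squarePoly Fq d g ^ 2) := by
    simpa using pow_mul_invB_div_sq hq h0 hΔ (g := g) rfl (j := 0) hm
  have hg : g ≠ 0 := Subtype.coe_ne_coe.1 (div_ne_zero (invJ_ne_zero h2 ha) (pow_ne_zero _ hΔ))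
  have hdeg : (betaSqPoly d g * squarePoly Fq d g ^ 2).natDegree ≤ d * (2 * d + 2) := by
    refine (Polynomial.natDegree_mul_le_of_le (natDegree_betaSqPoly_le d g)
      (Polynomial.natDegree_pow_le_of_le 2 (natDegree_squarePoly_le hq g))).trans_eq ?_
    ring
  refine rank_le_mul_of_pow_mul_eq_aeval (c := ⟨_, hBE⟩ ^ 2) (by omega : d ≠ 0) (by nlinarith)
    hdeg ?_ hBt fun E₁ hE₁ htE => ?_
  · simp [eval_zero_squarePoly hq, eval_zero_betaSqPoly (by omega : d ≠ 0), hg]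
  have haE : a 0 ∈ E₁ := by
    have hc : t ^ e * (invΓ Fq a / disc a ^ s) ≠ 0 := by
      simp [t, h0, hΔ, invΓ_ne_zero h2 ha]
    rw [pow_one] at hΓt
    rw [eq_div_of_mul_eq hc hΓt]
    exact div_mem (aeval_mem_of_le hE₁ htE _) (mul_mem (pow_mem htE e) (hE₁ hΓE))
  have hΔt : disc a = a 0 ^ 2 / t := by
    rw [ht, div_div_cancel₀ (pow_ne_zero 2 h0)]
  exact h E₁ hE₁ haE (hΔt ▸ div_mem (pow_mem haE 2) htE)

omit h in
theorem rank_le_of_generators_mem (hadj : IntermediateField.adjoin F (Set.range a) = ⊤)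
    (hm : m = ((2 * d + 1) * (d + 1) + 1) / 2) (hs : s = ((2 * d + 1) * d + 1) / 2) :
    Module.rank E K ≤ (d * (2 * d + 2) * (2 * d + 1) : ℕ) := by
  have hd0 : d ≠ 0 := by
    rintro rfl
    exact (Fintype.one_lt_card (α := Fq)).ne' hq
  have hbase : ∀ E' : IntermediateField F K, E ≤ E' → a 0 ∈ E' → disc a ∈ E' →
      Module.rank E' K ≤ (2 * d + 1 : ℕ) := fun E' hE haE hΔE =>
    hq ▸ rank_le_card_of_betaProd_mem hadj (ha.ne_zero 0) haE hΔE
      (betaProd_mem hq ha hΔ (hE hJE) (hE hBE) haE hΔE)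
  obtain ⟨e, hd | hd⟩ := Nat.even_or_odd' d
  · have hparity : (2 * d + 1) * d = 2 * ((2 * d + 1) * e) := by rw [mul_left_comm, ← hd]
    exact rank_le_of_even hq ha hΔ hJE hBE hΓE hbase hd hd0
      (by rw [mul_add_one] at hm ⊢; omega) (by omega)
  · have hparity : (2 * d + 1) * (d + 1) = 2 * ((2 * d + 1) * (e + 1)) := by
      rw [mul_left_comm, show d + 1 = 2 * (e + 1) by omega]
    exact rank_le_of_odd hq ha hΔ hJE hBE hΓE hbase hd (by omega)
      (by rw [mul_add_one] at hparity; omega)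

end RankBound

section GroupOrder

variable {Fq M G : Type*} [Field Fq] [AddCommGroup M] [Module Fq M] [Group G]
  [DistribMulAction G M] [SMulCommClass G Fq M] {a : Fin 3 → M}

theorem smul_polar (g : G) (v : Fin 3 → Fq) (a : Fin 3 → M) :
    g • polar v a = polar v (g • a) := by
  simp [polar, smul_comm g]

/-- Representatives `(0, 0, 1)` and `(1, c, c²)` of the points of the conic `disc v = 0`. -/
def conicPoint : Option Fq → Fin 3 → Fq
  | none => ![0, 0, 1]
  | some c => ![1, c, c ^ 2]

theorem conicPoint_injective : Function.Injective (conicPoint (Fq := Fq)) := by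
  rintro (_ | c) (_ | c') h
  · rfl
  · simpa [conicPoint] using congrFun h 0
  · simpa [conicPoint] using congrFun h 0
  · simpa [conicPoint] using congrFun h 1

theorem lead_conicPoint (p : Option Fq) : lead (conicPoint p) = 1 := by
  cases p <;> simp [lead, conicPoint]

theorem smul_conicPoint_inj {u u' : Fq} (hu : u ≠ 0) {p p' : Option Fq}
    (h : u • conicPoint p = u' • conicPoint p') : u = u' ∧ p = p' := by
  obtain rfl : u = u' := by simpa [lead_smul, lead_conicPoint] using congrArg lead h
  exact ⟨rfl, conicPoint_injective (smul_right_injective _ hu h)⟩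

theorem polar_conicPoint_none (a : Fin 3 → M) : polar (conicPoint (Fq := Fq) none) a = a 0 := by
  simp [polar, conicPoint]

theorem weyl_smul_conicPoint_none (u : Fq) :
    weyl (u • conicPoint (none : Option Fq)) = u • conicPoint (some 0) := by
  ext i
  fin_cases i <;> simp [weyl, conicPoint]

theorem weyl_smul_conicPoint_some_zero (u : Fq) :
    weyl (u • conicPoint (some 0)) = u • conicPoint (none : Option Fq) := by
  rw [← weyl_smul_conicPoint_none, weyl_weyl]

theorem shear_smul_conicPoint_some (u c c' : Fq) :
    shear c (u • conicPoint (some c')) = u • conicPoint (some (c' + c)) := by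
  ext i
  fin_cases i <;> simp [shear, conicPoint] <;> ring

theorem weyl_conicPoint_some {c : Fq} (hc : c ≠ 0) :
    weyl (conicPoint (some c)) = c ^ 2 • conicPoint (some (-c⁻¹)) := by
  ext i
  fin_cases i <;> simp [weyl, conicPoint]
  · field_simp
  · field_simp

variable (hshear : ∀ c : Fq, ∃ g : G, g • a = shear c a)
include hshear

theorem polar_shear_mem_orbit {m : M} {v : Fin 3 → Fq} (hv : polar v a ∈ MulAction.orbit G m)
    (c : Fq) : polar (shear c v) a ∈ MulAction.orbit G m := by
  obtain ⟨g, hg⟩ := hshear c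
  rw [← polar_shear, ← hg, ← smul_polar]
  exact MulAction.mem_orbit_of_mem_orbit g hv

omit [SMulCommClass G Fq M] in
theorem card_le_card_stabilizer [Finite G] (ha : LinearIndependent Fq a) :
    Nat.card Fq ≤ Nat.card (MulAction.stabilizer G (a 0)) := by
  choose g hg using hshear
  have hstab : ∀ c, g c ∈ MulAction.stabilizer G (a 0) := fun c => by
    simpa [shear] using congrFun (hg c) 0
  refine Nat.card_le_card_of_injective (fun c => ⟨g c, hstab c⟩) fun c c' h => ?_
  have h1 : shear c a = shear c' a := by rw [← hg, ← hg, Subtype.mk.inj h]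
  exact smul_left_injective Fq (ha.ne_zero 0) (by simpa [shear] using congrFun h1 1)

variable (hweyl : ∃ g : G, g • a = weyl a)
include hweyl

omit hshear in
theorem polar_weyl_mem_orbit {m : M} {v : Fin 3 → Fq} (hv : polar v a ∈ MulAction.orbit G m) :
    polar (weyl v) a ∈ MulAction.orbit G m := by
  obtain ⟨g, hg⟩ := hweyl
  rw [← polar_weyl, ← hg, ← smul_polar]
  exact MulAction.mem_orbit_of_mem_orbit g hv

theorem polar_sq_smul_conicPoint_mem_orbit {c : Fq} (hc : c ≠ 0) (p : Option Fq) :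
    polar (c ^ 2 • conicPoint p) a ∈ MulAction.orbit G (a 0) := by
  have hsome : ∀ u x y : Fq, polar (u • conicPoint (some x)) a ∈ MulAction.orbit G (a 0) →
      polar (u • conicPoint (some y)) a ∈ MulAction.orbit G (a 0) := fun u x y h => by
    simpa [shear_smul_conicPoint_some] using polar_shear_mem_orbit hshear h (y - x)
  have h0 : polar (conicPoint (some (0 : Fq))) a ∈ MulAction.orbit G (a 0) := by
    have h := polar_weyl_mem_orbit hweyl (v := (1 : Fq) • conicPoint (none : Option Fq)) (m := a 0)
    rw [weyl_smul_conicPoint_none, one_smul, one_smul, polar_conicPoint_none] at h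
    exact h (MulAction.mem_orbit_self _)
  have hc0 : polar (c ^ 2 • conicPoint (some (0 : Fq))) a ∈ MulAction.orbit G (a 0) := by
    refine hsome _ (-c⁻¹) _ (weyl_conicPoint_some hc ▸ polar_weyl_mem_orbit hweyl ?_)
    simpa using hsome 1 0 c (by simpa using h0)
  cases p with
  | none => exact weyl_smul_conicPoint_some_zero (c ^ 2) ▸ polar_weyl_mem_orbit hweyl hc0
  | some x => exact hsome _ 0 x hc0

variable [Fintype Fq] [Finite G] {d : ℕ}

theorem le_ncard_orbit (hq : Fintype.card Fq = 2 * d + 1) (ha : LinearIndependent Fq a) :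
    d * (2 * d + 2) ≤ (MulAction.orbit G (a 0)).ncard := by
  let f : Fq × Option Fq → M := fun y => polar (y.1 • conicPoint y.2) a
  have hcard : (nonzeroSquares Fq ×ˢ (Finset.univ : Finset (Option Fq))).card =
      d * (2 * d + 2) := by
    rw [Finset.card_product, card_nonzeroSquares hq, Finset.card_univ, Fintype.card_option, hq]
  rw [← hcard, ← Set.ncard_coe_finset]
  refine Set.ncard_le_ncard_of_injOn f ?_ ?_ (Set.finite_range _)
  · rintro ⟨u, p⟩ hu
    simp only [Finset.coe_product, Set.mem_prod, Finset.mem_coe, mem_nonzeroSquares] at hu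
    obtain ⟨hu0, c, rfl⟩ := hu.1
    rw [← sq] at hu0 ⊢
    exact polar_sq_smul_conicPoint_mem_orbit hshear hweyl (pow_ne_zero_iff two_ne_zero |>.1 hu0) p
  · rintro ⟨u, p⟩ hu ⟨u', p'⟩ - h
    simp only [Finset.coe_product, Set.mem_prod, Finset.mem_coe, mem_nonzeroSquares] at hu
    exact Prod.ext_iff.2
      (smul_conicPoint_inj hu.1.1 (polar_injective (two_ne_zero_of_card_eq hq) ha h))

theorem le_card_of_shear_of_weyl (hq : Fintype.card Fq = 2 * d + 1)
    (ha : LinearIndependent Fq a) : d * (2 * d + 2) * (2 * d + 1) ≤ Nat.card G := by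
  rw [← (MulAction.stabilizer G (a 0)).index_mul_card, MulAction.index_stabilizer, ← hq,
    ← Nat.card_eq_fintype_card (α := Fq)]
  exact Nat.mul_le_mul (le_ncard_orbit hshear hweyl hq ha) (card_le_card_stabilizer hshear ha)

end GroupOrder

section FixedField

variable {F K : Type*} [Field F] [Field K] [Algebra F K]

theorem mem_fixedField_closure {S : Set (K ≃ₐ[F] K)} {x : K} :
    x ∈ IntermediateField.fixedField (Subgroup.closure S) ↔ ∀ f ∈ S, f x = x := by
  rw [IntermediateField.mem_fixedField_iff]
  exact Subgroup.closure_le (K := MulAction.stabilizer (K ≃ₐ[F] K) x)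

theorem finite_of_le_fixedField {E : IntermediateField F K} [FiniteDimensional E K]
    {H : Subgroup (K ≃ₐ[F] K)} (hE : E ≤ IntermediateField.fixedField H) : Finite H :=
  have := Finite.of_equiv _ E.fixingSubgroupEquiv.symm.toEquiv
  Finite.of_injective _ (Subgroup.inclusion_injective ((IntermediateField.le_iff_le H E).1 hE))

theorem eq_fixedField_of_finrank_le_card {E : IntermediateField F K} [FiniteDimensional E K]
    {H : Subgroup (K ≃ₐ[F] K)} (hE : E ≤ IntermediateField.fixedField H)
    (h : Module.finrank E K ≤ Nat.card H) : E = IntermediateField.fixedField H := by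
  have := finite_of_le_fixedField hE
  have := Fintype.ofFinite H
  refine IntermediateField.eq_of_le_of_finrank_le' hE (h.trans_eq ?_)
  rw [Nat.card_eq_fintype_card]
  exact (FixedPoints.finrank_eq_card H K).symm

theorem algebraicIndependent_of_isAlgebraic {ι : Type*} [Finite ι] {x y : ι → K}
    (hx : AlgebraicIndependent F x)
    [h : Algebra.IsAlgebraic (IntermediateField.adjoin F (Set.range y)) K] :
    AlgebraicIndependent F y := by
  have := IntermediateField.isAlgebraic_adjoin_iff_top.1 h
  exact (Algebra.IsAlgebraic.isTranscendenceBasis_of_lift_le_trdeg_of_finite F y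
    hx.lift_cardinalMk_le_trdeg).1

theorem disc_ne_zero_of_algebraicIndependent {a : Fin 3 → K} (ha : AlgebraicIndependent F a) :
    disc a ≠ 0 := by
  have hX : disc (X : Fin 3 → MvPolynomial (Fin 3) F) ≠ 0 := fun h => by
    simpa [disc] using congrArg (eval ![0, 1, 0]) h
  have haX : aeval (R := F) a ∘ X = a := by
    ext i
    simp
  rw [← haX, ← AlgHom.coe_toRingHom, ← map_disc]
  exact (map_ne_zero_iff _ ha).2 hX

end FixedField

section InvariantField

variable (F Fq : Type*) {K : Type*} [Field F] [Field Fq] [Fintype Fq] [Field K] [Algebra F K]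
  [Algebra Fq K]

/-- The group of automorphisms of `K / F` generated by those acting on the triple `a` as
`shear c`, for `c` in `Fq`, or as `weyl`; if `a` generates `K`, this is the image of `SL₂(F_q)`. -/
def sl2Subgroup (a : Fin 3 → K) : Subgroup (K ≃ₐ[F] K) :=
  Subgroup.closure ({f | ∃ c : Fq, f ∘ a = shear c a} ∪ {f | f ∘ a = weyl a})

/-- The generators of the field of invariants: `B`, `J` and `Γ`, divided by powers of the
discriminant. -/
noncomputable def invariantRatios (d : ℕ) (a : Fin 3 → K) : Fin 3 → K :=
  ![invB Fq a / disc a ^ (((2 * d + 1) * (d + 1) + 1) / 2), invJ Fq a / disc a ^ (d + 1),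
    invΓ Fq a / disc a ^ (((2 * d + 1) * d + 1) / 2)]

variable {F Fq} {a : Fin 3 → K} {d : ℕ}

theorem map_invariantRatios (f : K →ₐ[Fq] K) (i : Fin 3) :
    f (invariantRatios Fq d a i) = invariantRatios Fq d (f ∘ a) i := by
  have hdisc : f (disc a) = disc (f ∘ a) := map_disc (f : K →+* K) a
  fin_cases i <;> simp [invariantRatios, hdisc, map_invB, map_invJ, map_invΓ]

theorem isSL2Invariant_invariantRatios (h2 : (2 : Fq) ≠ 0) :
    IsSL2Invariant Fq (invariantRatios Fq d : (Fin 3 → K) → Fin 3 → K) := by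
  constructor
  · simp only [invariantRatios, isSL2Invariant_disc.1, (isSL2Invariant_invB h2).1,
      isSL2Invariant_invJ.1, isSL2Invariant_invΓ.1, implies_true]
  · simp only [invariantRatios, (isSL2Invariant_disc (Fq := Fq)).2, (isSL2Invariant_invB h2).2,
      isSL2Invariant_invJ.2, isSL2Invariant_invΓ.2, implies_true]

variable [Algebra Fq F] [IsScalarTower Fq F K] (hq : Fintype.card Fq = 2 * d + 1)
include hq

theorem adjoin_invariantRatios_le_fixedField :
    IntermediateField.adjoin F (Set.range (invariantRatios Fq d a)) ≤
      IntermediateField.fixedField (sl2Subgroup F Fq a) := by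
  obtain ⟨hshear, hweyl⟩ := isSL2Invariant_invariantRatios (K := K) (d := d)
    (two_ne_zero_of_card_eq hq)
  rw [IntermediateField.adjoin_le_iff]
  rintro _ ⟨i, rfl⟩
  refine mem_fixedField_closure.2 fun f hf => ?_
  have hmap := map_invariantRatios (a := a) (d := d)
    ((f : K →ₐ[F] K).restrictScalars Fq) i
  obtain ⟨c, hf⟩ | hf := hf
  · exact hmap.trans (by rw [← hshear c a, ← hf]; rfl)
  · exact hmap.trans (by rw [← hweyl a, ← hf]; rfl)

variable (ha : AlgebraicIndependent F a) (hadj : IntermediateField.adjoin F (Set.range a) = ⊤)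
include ha hadj

theorem rank_adjoin_invariantRatios_le :
    Module.rank (IntermediateField.adjoin F (Set.range (invariantRatios Fq d a))) K ≤
      (d * (2 * d + 2) * (2 * d + 1) : ℕ) := by
  have hmem : ∀ i, invariantRatios Fq d a i ∈
      IntermediateField.adjoin F (Set.range (invariantRatios Fq d a)) :=
    fun i => IntermediateField.subset_adjoin F _ (Set.mem_range_self i)
  exact rank_le_of_generators_mem hq (ha.linearIndependent.restrict_scalars' Fq)
    (disc_ne_zero_of_algebraicIndependent ha) (hmem 1) (hmem 0) (hmem 2) hadj rfl rfl

theorem finiteDimensional_adjoin_invariantRatios : FiniteDimensional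
    (IntermediateField.adjoin F (Set.range (invariantRatios Fq d a))) K :=
  Module.rank_lt_aleph0_iff.1
    ((rank_adjoin_invariantRatios_le hq ha hadj).trans_lt Cardinal.natCast_lt_aleph0)

theorem algebraicIndependent_invariantRatios :
    AlgebraicIndependent F (invariantRatios Fq d a) := by
  have := finiteDimensional_adjoin_invariantRatios hq ha hadj
  exact algebraicIndependent_of_isAlgebraic ha

theorem adjoin_invariantRatios_eq_fixedField
    (hshear : ∀ c : Fq, ∃ f : K ≃ₐ[F] K, f ∘ a = shear c a)
    (hweyl : ∃ f : K ≃ₐ[F] K, f ∘ a = weyl a) :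
    IntermediateField.adjoin F (Set.range (invariantRatios Fq d a)) =
      IntermediateField.fixedField (sl2Subgroup F Fq a) := by
  have hle := adjoin_invariantRatios_le_fixedField (F := F) (a := a) hq
  have := finiteDimensional_adjoin_invariantRatios hq ha hadj
  have : Finite (sl2Subgroup F Fq a) := finite_of_le_fixedField hle
  have : SMulCommClass (sl2Subgroup F Fq a) Fq K :=
    ⟨fun f c x => map_smul ((f : K ≃ₐ[F] K).restrictScalars Fq) c x⟩
  refine eq_fixedField_of_finrank_le_card hle
    ((Module.finrank_le_of_rank_le (rank_adjoin_invariantRatios_le hq ha hadj)).trans ?_)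
  refine le_card_of_shear_of_weyl (a := a) (fun c => ?_) ?_ hq
    (ha.linearIndependent.restrict_scalars' Fq)
  · obtain ⟨f, hf⟩ := hshear c
    exact ⟨⟨f, Subgroup.subset_closure (Or.inl ⟨c, hf⟩)⟩, hf⟩
  · obtain ⟨f, hf⟩ := hweyl
    exact ⟨⟨f, Subgroup.subset_closure (Or.inr hf)⟩, hf⟩

end InvariantField

section RationalFunctions

variable (σ F : Type*) [Field F]

/-- The variables `X i`, as elements of the field of rational functions. -/
noncomputable def fractionX (i : σ) : FractionRing (MvPolynomial σ F) :=
  algebraMap (MvPolynomial σ F) _ (X i)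

variable {σ F}

theorem algebraMap_C (x : F) :
    algebraMap (MvPolynomial σ F) (FractionRing (MvPolynomial σ F)) (C x) = algebraMap F _ x :=
  (IsScalarTower.algebraMap_apply F (MvPolynomial σ F) _ x).symm

theorem algebraicIndependent_fractionX : AlgebraicIndependent F (fractionX σ F) :=
  (algebraicIndependent_X σ F).map' (f := IsScalarTower.toAlgHom F (MvPolynomial σ F) _)
    (IsFractionRing.injective _ _)

theorem adjoin_fractionX : IntermediateField.adjoin F (Set.range (fractionX σ F)) = ⊤ := by
  set L := IntermediateField.adjoin F (Set.range (fractionX σ F))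
  have hpoly : ∀ f : MvPolynomial σ F, algebraMap _ (FractionRing (MvPolynomial σ F)) f ∈ L := by
    intro f
    induction f using MvPolynomial.induction_on with
    | C a => exact algebraMap_C (σ := σ) a ▸ L.algebraMap_mem a
    | add f g hf hg =>
      rw [map_add]
      exact add_mem hf hg
    | mul_X f i hf =>
      rw [map_mul]
      exact mul_mem hf (IntermediateField.subset_adjoin F _ (Set.mem_range_self i))
  refine eq_top_iff.2 fun x _ => ?_
  obtain ⟨f, g, -, rfl⟩ := IsFractionRing.div_surjective (A := MvPolynomial σ F) x
  exact div_mem (hpoly f) (hpoly g)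

theorem algEquiv_ext_fractionX {K : Type*} [Field K] [Algebra F K]
    {f g : FractionRing (MvPolynomial σ F) ≃ₐ[F] K}
    (h : f ∘ fractionX σ F = g ∘ fractionX σ F) : f = g :=
  AlgEquiv.coe_toAlgHom_injective <|
    IsLocalization.algHom_ext (nonZeroDivisors (MvPolynomial σ F))
      (MvPolynomial.algHom_ext (congrFun h))

end RationalFunctions

section SL2Action

variable {F Fq : Type*} [Field F] [Field Fq] [Algebra Fq F]

theorem σK_algebraMap (c : F) (f : MvPolynomial (Fin 3) F) :
    σK F c (algebraMap _ _ f) = algebraMap _ (FractionRing (MvPolynomial (Fin 3) F)) (σP F c f) :=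
  IsFractionRing.ringEquivOfRingEquiv_algebraMap _ f

theorem τK_algebraMap (f : MvPolynomial (Fin 3) F) :
    τK F (algebraMap _ _ f) = algebraMap _ (FractionRing (MvPolynomial (Fin 3) F)) (τA F f) :=
  IsFractionRing.ringEquivOfRingEquiv_algebraMap _ f

/-- `σK F c`, as an automorphism over `F`. -/
noncomputable def σAut (c : F) :
    FractionRing (MvPolynomial (Fin 3) F) ≃ₐ[F] FractionRing (MvPolynomial (Fin 3) F) :=
  AlgEquiv.ofRingEquiv (f := σK F c) fun y => by
    rw [← algebraMap_C, σK_algebraMap, ← algebraMap_eq, AlgHom.commutes]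

variable (F) in
/-- `τK F`, as an automorphism over `F`. -/
noncomputable def τAut :
    FractionRing (MvPolynomial (Fin 3) F) ≃ₐ[F] FractionRing (MvPolynomial (Fin 3) F) :=
  AlgEquiv.ofRingEquiv (f := τK F) fun y => by
    rw [← algebraMap_C, τK_algebraMap, ← algebraMap_eq, AlgHom.commutes]

theorem σAut_comp_fractionX (c : Fq) :
    σAut (algebraMap Fq F c) ∘ fractionX (Fin 3) F = shear c (fractionX (Fin 3) F) := by
  ext i
  refine (σK_algebraMap _ (X i)).trans ?_
  fin_cases i <;>
    simp [σP, shear, fractionX, algebraMap_C, Algebra.smul_def,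
      IsScalarTower.algebraMap_apply Fq F (FractionRing (MvPolynomial (Fin 3) F)), map_ofNat]

theorem τAut_comp_fractionX : τAut F ∘ fractionX (Fin 3) F = weyl (fractionX (Fin 3) F) := by
  ext i
  refine (τK_algebraMap (X i)).trans ?_
  fin_cases i <;> simp [τA, weyl, fractionX]

theorem mem_fixedField_sl2Subgroup {y : FractionRing (MvPolynomial (Fin 3) F)} :
    y ∈ IntermediateField.fixedField (sl2Subgroup F Fq (fractionX (Fin 3) F)) ↔
      (∀ c : Fq, σK F (algebraMap Fq F c) y = y) ∧ τK F y = y := by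
  refine mem_fixedField_closure.trans ⟨fun h => ⟨fun c => ?_, ?_⟩, ?_⟩
  · exact h _ (Or.inl ⟨c, σAut_comp_fractionX c⟩)
  · exact h _ (Or.inr τAut_comp_fractionX)
  · rintro ⟨hσ, hτ⟩ f (⟨c, hf⟩ | hf)
    · rw [algEquiv_ext_fractionX (hf.trans (σAut_comp_fractionX c).symm)]
      exact hσ c
    · rw [algEquiv_ext_fractionX (hf.trans τAut_comp_fractionX.symm)]
      exact hτ

variable [Fintype Fq]

theorem betaProd_X : betaProd Fq (X : Fin 3 → MvPolynomial (Fin 3) F) =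
    ∏ c : Fq, (X 1 + C (algebraMap Fq F c) * X 0) := by
  simp only [betaProd, Algebra.smul_def, MvPolynomial.algebraMap_apply]

theorem gammaProd_X (k : Fq) : gammaProd k (X : Fin 3 → MvPolynomial (Fin 3) F) =
    ∏ c : Fq, (X 2 + C (2 * algebraMap Fq F c) * X 1 +
      C (algebraMap Fq F c ^ 2 - algebraMap Fq F k) * X 0) := by
  simp [gammaProd, polar, Algebra.smul_def, MvPolynomial.algebraMap_apply, map_ofNat]

theorem invariantRatios_fractionX (d : ℕ) :
    let ι := algebraMap (MvPolynomial (Fin 3) F) (FractionRing (MvPolynomial (Fin 3) F))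
    invariantRatios Fq d (fractionX (Fin 3) F) =
      ![ι (invB Fq X) / ι (disc X) ^ (((2 * d + 1) * (d + 1) + 1) / 2),
        ι (invJ Fq X) / ι (disc X) ^ (d + 1),
        ι (invΓ Fq X) / ι (disc X) ^ (((2 * d + 1) * d + 1) / 2)] := by
  intro ι
  let f := IsScalarTower.toAlgHom Fq (MvPolynomial (Fin 3) F)
    (FractionRing (MvPolynomial (Fin 3) F))
  have hB : ι (invB Fq X) = invB Fq (ι ∘ X) := map_invB f X
  have hJ : ι (invJ Fq X) = invJ Fq (ι ∘ X) := map_invJ f X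
  have hΓ : ι (invΓ Fq X) = invΓ Fq (ι ∘ X) := map_invΓ f X
  rw [hB, hJ, hΓ, map_disc]
  rfl

theorem adjoin_invariantRatios_fractionX {d : ℕ} (hq : Fintype.card Fq = 2 * d + 1) :
    IntermediateField.adjoin F (Set.range (invariantRatios Fq d (fractionX (Fin 3) F))) =
      IntermediateField.fixedField (sl2Subgroup F Fq (fractionX (Fin 3) F)) :=
  adjoin_invariantRatios_eq_fixedField hq algebraicIndependent_fractionX adjoin_fractionX
    (fun c => ⟨σAut (algebraMap Fq F c), σAut_comp_fractionX c⟩) ⟨τAut F, τAut_comp_fractionX⟩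

end SL2Action

/-- With `m = ⌊(q + 1 + q(q−1)/2)/2⌋` and `s = ⌊(1 + q(q−1)/2)/2⌋`, the fixed field
`F(a0,a1,a2)^{SL₂(F_q)}` equals `F(B/Δ^m, J/Δ^{(q+1)/2}, Γ/Δ^s)`, and these three generators
are algebraically independent over `F`; in particular the fixed field is a purely
transcendental extension of `F` of transcendence degree 3. -/
theorem SL2_fixed_field_purely_transcendental (F : Type*) [Field F] (p n q : ℕ)
    (hp : p.Prime) (hp2 : p ≠ 2) [CharP F p] (hn : n ≠ 0) (hq : q = p ^ n)
    (Fq : Type*) [Field Fq] [Fintype Fq] [Algebra Fq F] (hcard : Fintype.card Fq = q)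
    (m s : ℕ) (hm : m = (q + 1 + q * (q - 1) / 2) / 2) (hs : s = (1 + q * (q - 1) / 2) / 2)
    (Δ β γ₀ Γ B J : MvPolynomial (Fin 3) F)
    (hΔ : Δ = X 1 ^ 2 - X 0 * X 2)
    (hβ : β = ∏ c : Fq, (X 1 + C (algebraMap Fq F c) * X 0))
    (hγ : γ₀ = ∏ c : Fq,
      (X 2 + C (2 * algebraMap Fq F c) * X 1 + C ((algebraMap Fq F c) ^ 2) * X 0))
    (hΓ : Γ = ∏ k ∈ Finset.univ.filter (fun k : Fq => k ≠ 0 ∧ ¬ IsSquare k),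
      ∏ c : Fq, (X 2 + C (2 * algebraMap Fq F c) * X 1 +
        C ((algebraMap Fq F c) ^ 2 - algebraMap Fq F k) * X 0))
    (hB : B = β * ∏ k ∈ Finset.univ.filter (fun k : Fq => k ≠ 0 ∧ IsSquare k),
      ∏ c : Fq, (X 2 + C (2 * algebraMap Fq F c) * X 1 +
        C ((algebraMap Fq F c) ^ 2 - algebraMap Fq F k) * X 0))
    (hJ : J = X 0 * γ₀) :
    let K := FractionRing (MvPolynomial (Fin 3) F)
    let ι := algebraMap (MvPolynomial (Fin 3) F) K
    let g₁ : K := ι B / ι Δ ^ m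
    let g₂ : K := ι J / ι Δ ^ ((q + 1) / 2)
    let g₃ : K := ι Γ / ι Δ ^ s
    {x : K | (∀ c : Fq, σK F (algebraMap Fq F c) x = x) ∧ τK F x = x} =
      (Subfield.closure
        (Set.range (ι.comp (C : F →+* MvPolynomial (Fin 3) F)) ∪ {g₁, g₂, g₃}) : Set K) ∧
    AlgebraicIndependent F ![g₁, g₂, g₃] := by
  intro K ι g₁ g₂ g₃
  obtain ⟨d, hd⟩ : Odd q := hq ▸ (hp.odd_of_ne_two hp2).pow
  have hFq : Fintype.card Fq = 2 * d + 1 := hcard.trans hd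
  have hhalf : q * (q - 1) / 2 = (2 * d + 1) * d := by
    rw [hd, Nat.add_sub_cancel, mul_left_comm, Nat.mul_div_cancel_left _ two_pos]
  have hhalf' : (q + 1) / 2 = d + 1 := by omega
  have hm' : m = ((2 * d + 1) * (d + 1) + 1) / 2 := by grind
  have hs' : s = ((2 * d + 1) * d + 1) / 2 := by rw [hs, hhalf, add_comm]
  have hΔX : Δ = disc X := hΔ
  have hBX : B = invB Fq X := by simp only [hB, hβ, invB, betaProd_X, gammaProd_X, nonzeroSquares]
  have hJX : J = invJ Fq X := by simp only [hJ, hγ, invJ, gammaProd_X, map_zero, sub_zero]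
  have hΓX : Γ = invΓ Fq X := by simp only [hΓ, invΓ, gammaProd_X, nonsquares]
  have hg : ![g₁, g₂, g₃] = invariantRatios Fq d (fractionX (Fin 3) F) := by
    rw [invariantRatios_fractionX, ← hBX, ← hJX, ← hΓX, ← hm', ← hs', ← hhalf', ← hΔX]
  refine ⟨?_, hg ▸ algebraicIndependent_invariantRatios hFq algebraicIndependent_fractionX
    adjoin_fractionX⟩
  have hfixed := adjoin_invariantRatios_fractionX (F := F) hFq
  rw [← hg, Matrix.range_cons, Matrix.range_cons_cons_empty, Set.singleton_union] at hfixed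
  have hC : ι.comp C = algebraMap F K := RingHom.ext algebraMap_C
  ext y
  rw [Set.mem_ofPred_eq, ← mem_fixedField_sl2Subgroup, ← hfixed, hC]
  rfl
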